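/- arXiv:2304.01840 — 2 statements merged into one kernel-verified Lean document; each statement's English description precedes it below -/
import Mathlib

section
/- Fix S ⊆ N. For every i ∈ S, r_i^S = Σ_{j∈S} A^S_{ij} R_j, and for every i ∉ S, r_i^S = R_i − Σ_{j∈S} A^S_{ij} R_j. (The marginal rewards are the reduced costs of the reward LP, equation (14) of the paper.) -/
open Matrix BigOperators
open scoped Classical

noncomputable section

/-- Transition matrix of the `S`-active policy: row `i` of `P` if `i ∈ S`,
the `i`-th standard unit row otherwise. -/
def PAct {N : Type*} [DecidableEq N] (P : Matrix N N ℝ) (S : Finset N) : Matrix N N ℝ :=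
  fun i j => if i ∈ S then P i j else if i = j then 1 else 0

/-- Transition matrix of the `Sᶜ`-active policy. -/
def PPas {N : Type*} [DecidableEq N] (P : Matrix N N ℝ) (S : Finset N) : Matrix N N ℝ :=
  fun i j => if i ∈ S then (if i = j then 1 else 0) else P i j

/-- Basis matrix `B^S = I - β P^S`. -/
def BMat {N : Type*} [Fintype N] [DecidableEq N] (β : ℝ) (P : Matrix N N ℝ) (S : Finset N) :
    Matrix N N ℝ := 1 - β • PAct P S

/-- Non-basic matrix `N^S = I - β P^{Sᶜ}`. -/
def NMat {N : Type*} [Fintype N] [DecidableEq N] (β : ℝ) (P : Matrix N N ℝ) (S : Finset N) :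
    Matrix N N ℝ := 1 - β • PPas P S

/-- Basis inverse `H^S = (B^S)⁻¹`. -/
def HMat {N : Type*} [Fintype N] [DecidableEq N] (β : ℝ) (P : Matrix N N ℝ) (S : Finset N) :
    Matrix N N ℝ := (BMat β P S)⁻¹

/-- Tableau matrix `A^S = N^S · H^S`. -/
def AMat {N : Type*} [Fintype N] [DecidableEq N] (β : ℝ) (P : Matrix N N ℝ) (S : Finset N) :
    Matrix N N ℝ := NMat β P S * HMat β P S

/-- Work measure `g^S = H^S · 1_S`. -/
def gWork {N : Type*} [Fintype N] [DecidableEq N] (β : ℝ) (P : Matrix N N ℝ) (S : Finset N) :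
    N → ℝ := (HMat β P S).mulVec (fun j => if j ∈ S then 1 else 0)

/-- Reward measure `f^S = H^S · (R·1_S)`. -/
def fRew {N : Type*} [Fintype N] [DecidableEq N] (β : ℝ) (P : Matrix N N ℝ) (R : N → ℝ)
    (S : Finset N) : N → ℝ := (HMat β P S).mulVec (fun j => if j ∈ S then R j else 0)

/-- Marginal work `w_i^S`. -/
def wMarg {N : Type*} [Fintype N] [DecidableEq N] (β : ℝ) (P : Matrix N N ℝ) (S : Finset N)
    (i : N) : ℝ :=
  if i ∈ S then (1 - β) * gWork β P S i
  else 1 + β * ∑ j ∈ S, P i j * gWork β P S j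

/-- Marginal reward `r_i^S`. -/
def rMarg {N : Type*} [Fintype N] [DecidableEq N] (β : ℝ) (P : Matrix N N ℝ) (R : N → ℝ)
    (S : Finset N) (i : N) : ℝ :=
  if i ∈ S then (1 - β) * fRew β P R S i
  else R i + β * ∑ j ∈ S, P i j * fRew β P R S j

/-- Marginal productivity rate `ν_i^S = r_i^S / w_i^S`. -/
def nuMarg {N : Type*} [Fintype N] [DecidableEq N] (β : ℝ) (P : Matrix N N ℝ) (R : N → ℝ)
    (S : Finset N) (i : N) : ℝ := rMarg β P R S i / wMarg β P S i

/-- Feasibility of a pair of row vectors `(x⁰, x¹)` for initial state `i`: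
`x⁰, x¹ ≥ 0` and `(1-β) x⁰ + x¹ (I - β P) = e_i`. -/
def Feasible {N : Type*} [Fintype N] [DecidableEq N] (β : ℝ) (P : Matrix N N ℝ) (i : N)
    (x0 x1 : N → ℝ) : Prop :=
  (∀ j, 0 ≤ x0 j) ∧ (∀ j, 0 ≤ x1 j) ∧
    (1 - β) • x0 + Matrix.vecMul x1 (1 - β • P) = Pi.single i 1

/-- Modified reward vector `R̂ = R - (I - βP)·Q`. -/
def Rhat {N : Type*} [Fintype N] [DecidableEq N] (β : ℝ) (P : Matrix N N ℝ) (R Q : N → ℝ) :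
    N → ℝ := fun i => R i - ((1 - β • P).mulVec Q) i

theorem BMat_det_ne_zero_aux {N : Type*} [Fintype N] [DecidableEq N]
    (P : Matrix N N ℝ) (hP0 : ∀ i j, 0 ≤ P i j) (hP1 : ∀ i, ∑ j, P i j = 1)
    (β : ℝ) (hβ0 : 0 < β) (hβ1 : β < 1) (S : Finset N) : (BMat β P S).det ≠ 0 := by
  have h0 : ∀ i j, 0 ≤ PAct P S i j := by
    intro i j
    unfold PAct
    split_ifs
    · exact hP0 i j
    · exact zero_le_one
    · exact le_rfl
  have h1 : ∀ i, ∑ j, PAct P S i j = 1 := by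
    intro i
    unfold PAct
    by_cases hi : i ∈ S
    · simp [hi, hP1]
    · simp [hi]
  apply det_ne_zero_of_sum_row_lt_diag
  intro k
  have hs : ∑ j ∈ Finset.univ.erase k, ‖BMat β P S k j‖
      = β * ∑ j ∈ Finset.univ.erase k, PAct P S k j := by
    rw [Finset.mul_sum]
    apply Finset.sum_congr rfl
    intro j hj
    have hkj : k ≠ j := (Finset.ne_of_mem_erase hj).symm
    simp [BMat, Matrix.one_apply, hkj, abs_of_pos hβ0, abs_of_nonneg (h0 k j)]
  have h2 := Finset.add_sum_erase Finset.univ (fun j => PAct P S k j) (Finset.mem_univ k)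
  simp only [h1] at h2
  rw [hs]
  have hd : BMat β P S k k = 1 - β * PAct P S k k := by simp [BMat]
  rw [hd, Real.norm_eq_abs]
  refine lt_of_lt_of_le ?_ (le_abs_self _)
  have : ∑ j ∈ Finset.univ.erase k, PAct P S k j = 1 - PAct P S k k := by linarith
  rw [this]
  linarith

/-- equation (14): the marginal rewards are the reduced costs of the
reward LP. -/
theorem stmt8 {N : Type*} [Fintype N] [DecidableEq N] [Nonempty N]
    (P : Matrix N N ℝ) (hP0 : ∀ i j, 0 ≤ P i j) (hP1 : ∀ i, ∑ j, P i j = 1)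
    (β : ℝ) (hβ0 : 0 < β) (hβ1 : β < 1) (R : N → ℝ) (S : Finset N) :
    (∀ i ∈ S, rMarg β P R S i = ∑ j ∈ S, AMat β P S i j * R j) ∧
    (∀ i ∉ S, rMarg β P R S i = R i - ∑ j ∈ S, AMat β P S i j * R j) := by
  set v : N → ℝ := fun j => if j ∈ S then R j else 0 with hv
  have hdet : IsUnit (BMat β P S).det :=
    (BMat_det_ne_zero_aux P hP0 hP1 β hβ0 hβ1 S).isUnit
  have hBf : (BMat β P S).mulVec (fRew β P R S) = v := by
    unfold fRew HMat
    rw [Matrix.mulVec_mulVec, Matrix.mul_nonsing_inv _ hdet, Matrix.one_mulVec]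
  have hA : ∀ i, ∑ j ∈ S, AMat β P S i j * R j
      = fRew β P R S i - β * ∑ j, PPas P S i j * fRew β P R S j := by
    intro i
    have e1 : ∑ j ∈ S, AMat β P S i j * R j = ((AMat β P S).mulVec v) i := by
      simp [Matrix.mulVec, dotProduct, hv]
    have e2 : (AMat β P S).mulVec v = (NMat β P S).mulVec (fRew β P R S) := by
      unfold AMat fRew
      rw [Matrix.mulVec_mulVec]
    rw [e1, e2, NMat, Matrix.sub_mulVec, Matrix.one_mulVec, Matrix.smul_mulVec]
    rfl
  have hf0 : ∀ i, i ∉ S → fRew β P R S i = 0 := by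
    intro i hi
    have h := congrFun hBf i
    rw [BMat, Matrix.sub_mulVec, Matrix.one_mulVec, Matrix.smul_mulVec] at h
    simp [Matrix.mulVec, dotProduct, hv, PAct, hi] at h
    have h3 : (1 - β) * fRew β P R S i = 0 := by linarith
    rcases mul_eq_zero.mp h3 with h4 | h4
    · linarith
    · exact h4
  constructor
  · intro i hi
    rw [hA i]
    simp [rMarg, PPas, hi]
    ring
  · intro i hi
    have e : ∑ j ∈ S, P i j * fRew β P R S j = ∑ j, P i j * fRew β P R S j := by
      apply Finset.sum_subset (Finset.subset_univ S)
      intro j _ hj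
      rw [hf0 j hj, mul_zero]
    rw [hA i, hf0 i hi]
    simp [rMarg, PPas, hi, e]
end
end

section
/- Fix S ⊆ N and j ∉ S, and let T := S ∪ {j}. Define, for i, k ∉ S, P̃_{ik} := δ_{ik} − (1−β) A^S_{ik} and r̃_i := (1−β) r_i^S. Then 1 − P̃_{jj} = (1−β) A^S_{jj} ≠ 0, and the state-elimination update reproduces the corresponding quantities for T: for all i, k ∉ T, δ_{ik} − (1−β) A^T_{ik} = P̃_{ik} + P̃_{ij} P̃_{jk} / (1 − P̃_{jj}) and (1−β) r_i^T = r̃_i + r̃_j · P̃_{ij} / (1 − P̃_{jj}); moreover Σ_{k∉S} P̃_{ik} = 1 − (1−β) w_i^S for all i ∉ S. (One step of Proposition 8: the state-elimination algorithm computes the same quantities as conventional pivoting, equation (32) of the paper.) -/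
open Matrix BigOperators
open scoped Classical

noncomputable section

/-- The transition-like quantity `P̃_{ik} = δ_{ik} - (1-β) A^S_{ik}` of the
state-elimination algorithm. -/
def Ptil {N : Type*} [Fintype N] [DecidableEq N] (β : ℝ) (P : Matrix N N ℝ)
    (S : Finset N) (i k : N) : ℝ :=
  (if i = k then (1:ℝ) else 0) - (1 - β) * AMat β P S i k


theorem aux_det {N : Type*} [Fintype N] [DecidableEq N]
    (P : Matrix N N ℝ) (hP0 : ∀ i j, 0 ≤ P i j) (hP1 : ∀ i, ∑ j, P i j = 1)
    (β : ℝ) (hβ0 : 0 < β) (hβ1 : β < 1) (S : Finset N) : IsUnit (BMat β P S).det := by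
  rw [isUnit_iff_ne_zero]
  apply det_ne_zero_of_sum_row_lt_diag
  intro i
  have h0 : ∀ k, 0 ≤ PAct P S i k := by
    intro k; unfold PAct; split_ifs <;> simp [hP0]
  have h1 : ∑ k, PAct P S i k = 1 := by
    unfold PAct; split_ifs <;> simp [hP1]
  rw [← Finset.add_sum_erase _ _ (Finset.mem_univ i)] at h1
  have h2 : ∑ k ∈ Finset.univ.erase i, ‖BMat β P S i k‖
      = β * ∑ k ∈ Finset.univ.erase i, PAct P S i k := by
    rw [Finset.mul_sum]
    apply Finset.sum_congr rfl
    intro k hk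
    have hk' : i ≠ k := (Finset.ne_of_mem_erase hk).symm
    simp only [BMat, Matrix.sub_apply, Matrix.smul_apply, Matrix.one_apply_ne hk', smul_eq_mul,
      zero_sub, norm_neg, Real.norm_eq_abs]
    exact abs_of_nonneg (mul_nonneg hβ0.le (h0 k))
  rw [h2]
  have h3 : BMat β P S i i = 1 - β * PAct P S i i := by simp [BMat]
  rw [h3]
  refine lt_of_lt_of_le ?_ (le_abs_self _)
  have := h0 i
  nlinarith

theorem aux_r {N : Type*} [Fintype N] [DecidableEq N]
    (P : Matrix N N ℝ) (β : ℝ) (hβ1 : β < 1) (R : N → ℝ) (S : Finset N)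
    (hdet : IsUnit (BMat β P S).det) (i : N) (hi : i ∉ S) :
    rMarg β P R S i = R i - ∑ k ∈ S, AMat β P S i k * R k := by
  have hf : (BMat β P S).mulVec (fRew β P R S) = fun j => if j ∈ S then R j else 0 := by
    unfold fRew HMat
    rw [Matrix.mulVec_mulVec, Matrix.mul_nonsing_inv _ hdet, Matrix.one_mulVec]
  have hz : ∀ k, k ∉ S → fRew β P R S k = 0 := by
    intro k hk
    have h := congrFun hf k
    simp only [hk, if_false] at h
    have h2 : (BMat β P S).mulVec (fRew β P R S) k = (1 - β) * fRew β P R S k := by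
      unfold BMat
      rw [Matrix.sub_mulVec, Matrix.smul_mulVec]
      simp [Matrix.mulVec, dotProduct, PAct, hk]
      ring
    rw [h2] at h
    rcases mul_eq_zero.mp h with h | h
    · linarith
    · exact h
  have hA : ∑ k ∈ S, AMat β P S i k * R k = (NMat β P S).mulVec (fRew β P R S) i := by
    unfold fRew
    rw [Matrix.mulVec_mulVec]
    simp [Matrix.mulVec, dotProduct, AMat, Finset.sum_ite_mem]
  have hN : (NMat β P S).mulVec (fRew β P R S) i = - (β * ∑ k ∈ S, P i k * fRew β P R S k) := by
    unfold NMat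
    rw [Matrix.sub_mulVec, Matrix.smul_mulVec]
    simp only [Matrix.one_mulVec, Pi.sub_apply, Pi.smul_apply, smul_eq_mul, hz i hi, zero_sub,
      Matrix.mulVec, dotProduct, PPas, hi, if_false]
    congr 2
    symm
    apply Finset.sum_subset (Finset.subset_univ S)
    intro k _ hk
    simp [hz k hk]
  rw [hA, hN]
  simp [rMarg, hi]

theorem aux_w {N : Type*} [Fintype N] [DecidableEq N]
    (P : Matrix N N ℝ) (β : ℝ) (S : Finset N) (i : N) :
    wMarg β P S i = rMarg β P (fun _ => 1) S i := rfl

theorem aux_sum {N : Type*} [Fintype N] [DecidableEq N]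
    (P : Matrix N N ℝ) (hP1 : ∀ i, ∑ j, P i j = 1)
    (β : ℝ) (hβ1 : β < 1) (S : Finset N)
    (hdet : IsUnit (BMat β P S).det) (i : N) : ∑ k, AMat β P S i k = 1 := by
  have hB : (BMat β P S).mulVec (fun _ => 1) = fun _ => (1 - β) := by
    funext k
    unfold BMat
    rw [Matrix.sub_mulVec, Matrix.smul_mulVec]
    by_cases hk : k ∈ S <;> simp [Matrix.mulVec, dotProduct, PAct, hk, hP1]
  have hN : (NMat β P S).mulVec (fun _ => 1) = fun _ => (1 - β) := by
    funext k
    unfold NMat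
    rw [Matrix.sub_mulVec, Matrix.smul_mulVec]
    by_cases hk : k ∈ S <;> simp [Matrix.mulVec, dotProduct, PPas, hk, hP1]
  have hAB : AMat β P S * BMat β P S = NMat β P S := by
    unfold AMat HMat
    rw [Matrix.mul_assoc, Matrix.nonsing_inv_mul _ hdet, Matrix.mul_one]
  have h := congrFun hN i
  rw [← hAB, ← Matrix.mulVec_mulVec, hB] at h
  simp only [Matrix.mulVec, dotProduct, ← Finset.sum_mul] at h
  have : (1 - β) ≠ 0 := by linarith
  exact mul_right_cancel₀ this (by rw [h, one_mul])

theorem aux_piv {N : Type*} [Fintype N] [DecidableEq N]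
    (P : Matrix N N ℝ) (β : ℝ) (S : Finset N) (j : N) (hj : j ∉ S)
    (hS : IsUnit (BMat β P S).det) (hT : IsUnit (BMat β P (insert j S)).det) :
    AMat β P S j j ≠ 0 ∧ ∀ i, i ∉ insert j S → ∀ l,
      AMat β P S i l = AMat β P (insert j S) i j * AMat β P S j l
        + if l = j then 0 else AMat β P (insert j S) i l := by
  have key : ∀ (X : Matrix N N ℝ) (i l : N),
      (X * (BMat β P (insert j S) * HMat β P S)) i l
        = X i j * AMat β P S j l + if l = j then 0 else X i l := by
    intro X i l
    have hM : ∀ k, (BMat β P (insert j S) * HMat β P S) k l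
        = if k = j then AMat β P S j l else (1 : Matrix N N ℝ) k l := by
      intro k
      split_ifs with hk
      · subst hk
        simp [AMat, Matrix.mul_apply, BMat, NMat, PAct, PPas, hj]
      · have : (1 : Matrix N N ℝ) = BMat β P S * HMat β P S :=
          (Matrix.mul_nonsing_inv _ hS).symm
        rw [this]
        simp [Matrix.mul_apply, BMat, PAct, hk]
    rw [Matrix.mul_apply, ← Finset.add_sum_erase _ _ (Finset.mem_univ j), hM j, if_pos rfl]
    congr 1
    have : ∀ k ∈ Finset.univ.erase j, X i k * (BMat β P (insert j S) * HMat β P S) k l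
        = if k = l then X i k else 0 := by
      intro k hk
      rw [hM, if_neg (Finset.ne_of_mem_erase hk), Matrix.one_apply]
      simp
    rw [Finset.sum_congr rfl this, Finset.sum_ite_eq']
    by_cases hl : l = j <;> simp [hl]
  constructor
  · have h := key (BMat β P S * HMat β P (insert j S)) j j
    have h1 : BMat β P S * HMat β P (insert j S) * (BMat β P (insert j S) * HMat β P S) = 1 := by
      unfold HMat
      rw [Matrix.mul_assoc, ← Matrix.mul_assoc _ _ (BMat β P S)⁻¹, Matrix.nonsing_inv_mul _ hT,
        Matrix.one_mul, Matrix.mul_nonsing_inv _ hS]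
    rw [h1] at h
    intro h0
    simp [h0] at h
  · intro i hi l
    rw [← key]
    have h1 : AMat β P (insert j S) * (BMat β P (insert j S) * HMat β P S)
        = NMat β P (insert j S) * HMat β P S := by
      unfold AMat
      rw [Matrix.mul_assoc, ← Matrix.mul_assoc (HMat β P (insert j S))]
      congr 1
      unfold HMat
      rw [Matrix.nonsing_inv_mul _ hT, Matrix.one_mul]
    rw [h1]
    have hi' : ¬ (i = j ∨ i ∈ S) := by simpa using hi
    have hi2 : i ∉ S := fun h => hi' (Or.inr h)
    have hi3 : i ≠ j := fun h => hi' (Or.inl h)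
    simp [AMat, Matrix.mul_apply, NMat, PPas, hi3, hi2]

/-- one step of Proposition 8, equation (32): the state-elimination
update reproduces the conventional-pivoting quantities. -/
theorem stmt17 {N : Type*} [Fintype N] [DecidableEq N] [Nonempty N]
    (P : Matrix N N ℝ) (hP0 : ∀ i j, 0 ≤ P i j) (hP1 : ∀ i, ∑ j, P i j = 1)
    (β : ℝ) (hβ0 : 0 < β) (hβ1 : β < 1) (R : N → ℝ)
    (S : Finset N) (j : N) (hj : j ∉ S) :
    (1 - Ptil β P S j j = (1 - β) * AMat β P S j j ∧ 1 - Ptil β P S j j ≠ 0) ∧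
    (∀ i k : N, i ∉ insert j S → k ∉ insert j S →
      (if i = k then (1:ℝ) else 0) - (1 - β) * AMat β P (insert j S) i k
        = Ptil β P S i k + Ptil β P S i j * Ptil β P S j k / (1 - Ptil β P S j j)) ∧
    (∀ i : N, i ∉ insert j S →
      (1 - β) * rMarg β P R (insert j S) i
        = (1 - β) * rMarg β P R S i
          + (1 - β) * rMarg β P R S j * Ptil β P S i j / (1 - Ptil β P S j j)) ∧
    (∀ i : N, i ∉ S →
      ∑ k ∈ Sᶜ, Ptil β P S i k = 1 - (1 - β) * wMarg β P S i) := by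
  have hS := aux_det P hP0 hP1 β hβ0 hβ1 S
  have hT := aux_det P hP0 hP1 β hβ0 hβ1 (insert j S)
  obtain ⟨hA, hpiv⟩ := aux_piv P β S j hj hS hT
  have hb : (1 - β) ≠ 0 := by linarith
  have h1 : 1 - Ptil β P S j j = (1 - β) * AMat β P S j j := by simp [Ptil]
  refine ⟨⟨h1, h1 ▸ mul_ne_zero hb hA⟩, ?_, ?_, ?_⟩
  · intro i k hi hk
    have hij : i ≠ j := fun h => hi (by simp [h])
    have hkj : k ≠ j := fun h => hk (by simp [h])
    have e1 := hpiv i hi j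
    have e2 := hpiv i hi k
    rw [if_pos rfl, add_zero] at e1
    rw [if_neg hkj] at e2
    rw [h1]
    simp only [Ptil, if_neg hij, if_neg hkj.symm]
    rw [e2, e1]
    field_simp
    ring
  · intro i hi
    have hij : i ≠ j := fun h => hi (by simp [h])
    have hiS : i ∉ S := fun h => hi (by simp [h])
    rw [aux_r P β hβ1 R _ hT i hi, aux_r P β hβ1 R S hS i hiS, aux_r P β hβ1 R S hS j hj, h1,
      Finset.sum_insert hj]
    have e1 := hpiv i hi j
    rw [if_pos rfl, add_zero] at e1
    have e2 : ∑ k ∈ S, AMat β P S i k * R k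
        = AMat β P (insert j S) i j * ∑ k ∈ S, AMat β P S j k * R k
          + ∑ k ∈ S, AMat β P (insert j S) i k * R k := by
      rw [Finset.mul_sum, ← Finset.sum_add_distrib]
      apply Finset.sum_congr rfl
      intro k hk
      have hkj : k ≠ j := fun h => hj (h ▸ hk)
      rw [hpiv i hi k, if_neg hkj]
      ring
    simp only [Ptil, if_neg hij]
    rw [e2, e1]
    field_simp
    ring
  · intro i hi
    rw [aux_w, aux_r P β hβ1 _ S hS i hi]
    have h := aux_sum P hP1 β hβ1 S hS i
    rw [← Finset.sum_add_sum_compl S] at h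
    simp only [Ptil, Finset.sum_sub_distrib, ← Finset.mul_sum, mul_one]
    rw [Finset.sum_ite_eq, if_pos (by simpa using hi)]
    rw [← h]
    ring
end
end
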